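/- arXiv:2207.06697 — 2 statements merged into one kernel-verified Lean document; each statement's English description precedes it below -/
import Mathlib

section
/- Let r ∈ ℝ, T > 0 and p > 4. Then there exists a constant C = C(r,p,T) > 0 such that for all 0 ≤ s ≤ t ≤ T, sup_{x≥0} ( ∫_0^s [ ∫_0^∞ |G_r(t−u,x,z) − G_r(s−u,x,z)|² dz ]^{p/(p−2)} du )^{(p−2)/2} ≤ C |t−s|^{(p−4)/4}. -/
open MeasureTheory Real Set Filter

/-- Dirichlet heat kernel on `[0,∞)`. -/
noncomputable def G (t x y : ℝ) : ℝ :=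
  (Real.sqrt (4 * Real.pi * t))⁻¹ *
    (Real.exp (-(x - y) ^ 2 / (4 * t)) - Real.exp (-(x + y) ^ 2 / (4 * t)))

/-- Exponentially weighted kernel `G_r(t,x,y) = e^{-r(x-y)} G(t,x,y)`. -/
noncomputable def Gr (r t x y : ℝ) : ℝ := Real.exp (-r * (x - y)) * G t x y

/-- Weighted sup norm `‖v‖_{L_r} = sup_{x ≥ 0} e^{-rx}|v(x)|`. -/
noncomputable def LrNorm (r : ℝ) (v : ℝ → ℝ) : ℝ :=
  sSup ((fun x => Real.exp (-r * x) * |v x|) '' Ici 0)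

/-- Weighted sup norm `‖u‖_{C_r^T} = sup_{t ∈ [0,T]} sup_{x ≥ 0} e^{-rx}|u(t,x)|`. -/
noncomputable def CrNorm (r T : ℝ) (u : ℝ → ℝ → ℝ) : ℝ :=
  sSup ((fun q : ℝ × ℝ => Real.exp (-r * q.2) * |u q.1 q.2|) '' (Icc 0 T ×ˢ Ici 0))

/-- `‖u‖_{C_r^T} < ∞`, expressed as boundedness of the weighted values. -/
def CrBdd (r T : ℝ) (u : ℝ → ℝ → ℝ) : Prop :=
  BddAbove ((fun q : ℝ × ℝ => Real.exp (-r * q.2) * |u q.1 q.2|) '' (Icc 0 T ×ˢ Ici 0))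

/-!
Write `G t x z = h t (x - z) - h t (x + z)`, where `h` is the Gaussian heat kernel on the line. The
squared `L²` norm of the increment of `Gr r` from time `τ` to time `τ + δ ≤ T` is at most
`M τ^{-1/2} min(1, δ/τ)²`, uniformly in `x ≥ 0`. For `δ ≥ τ` this only uses
`0 ≤ G t x z ≤ h t (x - z)`. For `δ ≤ τ` it comes from the mean value theorem and
`|∂ₜ h t w| ≤ (3/t) h (2t) w`, where doubling the time pays for the factor `w²/t` produced by the
derivative. In both cases the weight `exp(-2r(x - z))` costs a bounded factor, since
`∫ exp(cw) h t w dw = exp(c²t)`.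

With `q = p/(p-2) ∈ (1,2)`, the function `τ ↦ τ^{-q/2} min(1, δ/τ)^{2q}` has over `(0,∞)` the
integral `C δ^{1-q/2}`, and `(1 - q/2)(p-2)/2 = (p-4)/4`.
-/

open ProbabilityTheory

/-- The Gaussian heat kernel `(4πt)^{-1/2} exp(-w²/(4t))` on the line, as a function of the time `t`
and the displacement `w`; the Dirichlet kernel `G` is obtained from it by reflection. -/
noncomputable def heatKernel (t w : ℝ) : ℝ := (√(4 * π * t))⁻¹ * exp (-w ^ 2 / (4 * t))

lemma heatKernel_nonneg (t w : ℝ) : 0 ≤ heatKernel t w := by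
  unfold heatKernel
  positivity

lemma heatKernel_le_heatKernel_of_abs_le {t v w : ℝ} (ht : 0 ≤ t) (hvw : |v| ≤ |w|) :
    heatKernel t w ≤ heatKernel t v := by
  have hsq : v ^ 2 ≤ w ^ 2 := sq_le_sq.2 hvw
  unfold heatKernel
  gcongr

lemma heatKernel_le_sqrt_div_mul_heatKernel {s t : ℝ} (hs : 0 < s) (hst : s ≤ t) (w : ℝ) :
    heatKernel s w ≤ √(t / s) * heatKernel t w := by
  have ht : 0 < t := hs.trans_le hst
  have hprefactor : (√(4 * π * s))⁻¹ = √(t / s) * (√(4 * π * t))⁻¹ := by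
    rw [← sqrt_inv, ← sqrt_inv, ← sqrt_mul (by positivity)]
    congr 1
    field_simp
  have hexp : exp (-w ^ 2 / (4 * s)) ≤ exp (-w ^ 2 / (4 * t)) := by
    rw [neg_div, neg_div]
    gcongr
  calc heatKernel s w
      = √(t / s) * (√(4 * π * t))⁻¹ * exp (-w ^ 2 / (4 * s)) := by rw [heatKernel, hprefactor]
    _ ≤ √(t / s) * (√(4 * π * t))⁻¹ * exp (-w ^ 2 / (4 * t)) := by gcongr
    _ = √(t / s) * heatKernel t w := by rw [heatKernel, mul_assoc]

lemma heatKernel_sq {t : ℝ} (ht : 0 < t) (w : ℝ) :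
    heatKernel t w ^ 2 = (√(8 * π * t))⁻¹ * heatKernel (t / 2) w := by
  have hprefactor : (√(4 * π * t))⁻¹ ^ 2 = (√(8 * π * t))⁻¹ * (√(4 * π * (t / 2)))⁻¹ := by
    rw [inv_pow, ← mul_inv, ← sqrt_mul (by positivity), sq_sqrt (by positivity),
      show 8 * π * t * (4 * π * (t / 2)) = (4 * π * t) ^ 2 by ring, sqrt_sq (by positivity)]
  have hexp : exp (-w ^ 2 / (4 * t)) ^ 2 = exp (-w ^ 2 / (4 * (t / 2))) := by
    rw [← exp_nat_mul]
    congr 1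
    push_cast
    field_simp
  rw [heatKernel, heatKernel, mul_pow, hprefactor, hexp, mul_assoc]

lemma heatKernel_eq_heatKernel_two_mul {t : ℝ} (ht : 0 < t) (w : ℝ) :
    heatKernel t w = √2 * exp (-(w ^ 2 / (8 * t))) * heatKernel (2 * t) w := by
  have hsqrt : √(4 * π * (2 * t)) = √2 * √(4 * π * t) := by
    rw [← sqrt_mul (by norm_num)]
    congr 1
    ring
  have hexp : exp (-w ^ 2 / (4 * t))
      = exp (-(w ^ 2 / (8 * t))) * exp (-w ^ 2 / (4 * (2 * t))) := by
    rw [← exp_add]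
    congr 1
    field_simp
    ring
  rw [heatKernel, heatKernel, hsqrt, hexp]
  field_simp

lemma hasDerivAt_heatKernel {t : ℝ} (ht : 0 < t) (w : ℝ) :
    HasDerivAt (fun τ => heatKernel τ w)
      ((w ^ 2 / (4 * t ^ 2) - 1 / (2 * t)) * heatKernel t w) t := by
  have hsqrt : HasDerivAt (fun τ => √(4 * π * τ)) (4 * π / (2 * √(4 * π * t))) t := by
    simpa using ((hasDerivAt_id t).const_mul (4 * π)).sqrt (by positivity)
  have hexp : HasDerivAt (fun τ => exp (-w ^ 2 / (4 * τ)))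
      (exp (-w ^ 2 / (4 * t)) * (w ^ 2 / (4 * t ^ 2))) t := by
    refine ((hasDerivAt_const t (-w ^ 2)).fun_div ((hasDerivAt_id' t).const_mul 4)
      (by positivity)).exp.congr_deriv ?_
    field_simp
    ring
  have hsq : √(4 * π * t) ^ 2 = 4 * π * t := sq_sqrt (by positivity)
  refine ((hsqrt.inv (by positivity)).mul hexp).congr_deriv ?_
  unfold heatKernel
  simp only [Pi.inv_apply]
  rw [hsq]
  field_simp
  ring

lemma abs_two_mul_sub_half_mul_exp_neg_le {y : ℝ} (hy : 0 ≤ y) :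
    |2 * y - 1 / 2| * exp (-y) ≤ 2 := by
  have hlinear : y * exp (-y) ≤ 1 :=
    (mul_exp_neg_le_exp_neg_one y).trans (exp_le_one_iff.2 (by norm_num))
  have hconst : exp (-y) ≤ 1 := exp_le_one_iff.2 (neg_nonpos.2 hy)
  have hproduct : 0 ≤ y * exp (-y) := by positivity
  rw [← abs_of_pos (exp_pos (-y)), ← abs_mul, sub_mul, mul_assoc, abs_le]
  constructor <;> linarith [exp_pos (-y)]

lemma abs_deriv_heatKernel_le {t : ℝ} (ht : 0 < t) (w : ℝ) :
    |deriv (fun τ => heatKernel τ w) t| ≤ 3 / t * heatKernel (2 * t) w := by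
  set y := w ^ 2 / (8 * t) with hy
  have hsqrt_two : √2 ≤ 3 / 2 := by
    rw [sqrt_le_left (by norm_num)]
    norm_num
  have hfactor : w ^ 2 / (4 * t ^ 2) - 1 / (2 * t) = (2 * y - 1 / 2) / t := by
    rw [hy]
    field_simp
    ring
  calc |deriv (fun τ => heatKernel τ w) t|
      = √2 * (|2 * y - 1 / 2| * exp (-y)) / t * heatKernel (2 * t) w := by
        rw [(hasDerivAt_heatKernel ht w).deriv, abs_mul, abs_of_nonneg (heatKernel_nonneg t w),
          heatKernel_eq_heatKernel_two_mul ht, hfactor, abs_div, abs_of_pos ht]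
        ring
    _ ≤ 3 / 2 * 2 / t * heatKernel (2 * t) w := by
        have := heatKernel_nonneg (2 * t) w
        gcongr
        exact abs_two_mul_sub_half_mul_exp_neg_le (by positivity)
    _ = 3 / t * heatKernel (2 * t) w := by norm_num

lemma abs_heatKernel_sub_heatKernel_le {a b : ℝ} (ha : 0 < a) (hab : a ≤ b) (w : ℝ) :
    |heatKernel b w - heatKernel a w|
      ≤ 3 * ((b - a) / a) * √(b / a) * heatKernel (2 * b) w := by
  have hderiv_le : ∀ σ ∈ Icc a b, ‖deriv (fun τ => heatKernel τ w) σ‖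
      ≤ 3 / a * (√(b / a) * heatKernel (2 * b) w) := by
    rintro σ ⟨haσ, hσb⟩
    have hσ : 0 < σ := ha.trans_le haσ
    have hb : 0 < b := hσ.trans_le hσb
    have hnonneg := heatKernel_nonneg (2 * b) w
    calc |deriv (fun τ => heatKernel τ w) σ|
        ≤ 3 / σ * heatKernel (2 * σ) w := abs_deriv_heatKernel_le hσ w
      _ ≤ 3 / σ * (√(2 * b / (2 * σ)) * heatKernel (2 * b) w) := by
          gcongr
          exact heatKernel_le_sqrt_div_mul_heatKernel (by positivity) (by gcongr) w
      _ ≤ 3 / a * (√(b / a) * heatKernel (2 * b) w) := by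
          rw [mul_div_mul_left b σ two_ne_zero]
          gcongr
  calc |heatKernel b w - heatKernel a w|
      ≤ 3 / a * (√(b / a) * heatKernel (2 * b) w) * |b - a| :=
        (convex_Icc a b).norm_image_sub_le_of_norm_deriv_le
          (fun σ hσ => (hasDerivAt_heatKernel (ha.trans_le hσ.1) w).differentiableAt)
          hderiv_le (left_mem_Icc.2 hab) (right_mem_Icc.2 hab)
    _ = 3 * ((b - a) / a) * √(b / a) * heatKernel (2 * b) w := by
        rw [abs_of_nonneg (sub_nonneg.2 hab)]
        ring

lemma heatKernel_eq_gaussianPDFReal {t : ℝ} (ht : 0 ≤ t) (w : ℝ) :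
    heatKernel t w = gaussianPDFReal 0 (2 * t).toNNReal w := by
  rw [heatKernel, gaussianPDFReal, coe_toNNReal _ (by positivity), sub_zero]
  ring_nf

lemma integral_exp_mul_heatKernel {t : ℝ} (ht : 0 < t) (c : ℝ) :
    ∫ w, exp (c * w) * heatKernel t w = exp (c ^ 2 * t) := by
  have hvar : (2 * t).toNNReal ≠ 0 := (toNNReal_pos.2 (by positivity)).ne'
  calc ∫ w, exp (c * w) * heatKernel t w
      = mgf id (gaussianReal 0 (2 * t).toNNReal) c := by
        rw [mgf, integral_gaussianReal_eq_integral_smul hvar]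
        simp only [heatKernel_eq_gaussianPDFReal ht.le, smul_eq_mul, id, mul_comm]
    _ = exp (c ^ 2 * t) := by
        rw [mgf_id_gaussianReal, coe_toNNReal _ (by positivity)]
        ring_nf

lemma integrable_exp_mul_heatKernel {t : ℝ} (ht : 0 < t) (c : ℝ) :
    Integrable fun w => exp (c * w) * heatKernel t w :=
  .of_integral_ne_zero <| by
    rw [integral_exp_mul_heatKernel ht]
    exact exp_ne_zero _

lemma exp_mul_heatKernel_sq {t : ℝ} (ht : 0 < t) (c w : ℝ) :
    (exp (c * w) * heatKernel t w) ^ 2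
      = (√(8 * π * t))⁻¹ * (exp (2 * c * w) * heatKernel (t / 2) w) := by
  rw [mul_pow, heatKernel_sq ht, ← exp_nat_mul, Nat.cast_ofNat, mul_assoc 2]
  ring

lemma integral_exp_mul_heatKernel_sq {t : ℝ} (ht : 0 < t) (c : ℝ) :
    ∫ w, (exp (c * w) * heatKernel t w) ^ 2 = (√(8 * π * t))⁻¹ * exp (2 * c ^ 2 * t) := by
  simp only [exp_mul_heatKernel_sq ht]
  rw [integral_const_mul, integral_exp_mul_heatKernel (half_pos ht)]
  ring_nf

lemma integrable_exp_mul_heatKernel_sq {t : ℝ} (ht : 0 < t) (c : ℝ) :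
    Integrable fun w => (exp (c * w) * heatKernel t w) ^ 2 := by
  simp only [exp_mul_heatKernel_sq ht]
  exact (integrable_exp_mul_heatKernel (half_pos ht) _).const_mul _

lemma G_eq_heatKernel_sub_heatKernel (t x z : ℝ) :
    G t x z = heatKernel t (x - z) - heatKernel t (x + z) :=
  mul_sub _ _ _

lemma heatKernel_add_le_heatKernel_sub {t x z : ℝ} (ht : 0 ≤ t) (hx : 0 ≤ x) (hz : 0 ≤ z) :
    heatKernel t (x + z) ≤ heatKernel t (x - z) :=
  heatKernel_le_heatKernel_of_abs_le ht <| by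
    rw [abs_of_nonneg (add_nonneg hx hz), abs_le]
    constructor <;> linarith

lemma G_nonneg {t x z : ℝ} (ht : 0 ≤ t) (hx : 0 ≤ x) (hz : 0 ≤ z) : 0 ≤ G t x z := by
  rw [G_eq_heatKernel_sub_heatKernel]
  exact sub_nonneg.2 (heatKernel_add_le_heatKernel_sub ht hx hz)

lemma G_le_heatKernel (t x z : ℝ) : G t x z ≤ heatKernel t (x - z) := by
  rw [G_eq_heatKernel_sub_heatKernel]
  exact sub_le_self _ (heatKernel_nonneg t _)

lemma abs_G_sub_G_sq_le {a b x z : ℝ} (ha : 0 ≤ a) (hb : 0 ≤ b) (hx : 0 ≤ x) (hz : 0 ≤ z) :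
    |G b x z - G a x z| ^ 2 ≤ heatKernel b (x - z) ^ 2 + heatKernel a (x - z) ^ 2 := by
  have hGa := G_nonneg ha hx hz
  have hGb := G_nonneg hb hx hz
  calc |G b x z - G a x z| ^ 2
      ≤ G b x z ^ 2 + G a x z ^ 2 := by
        rw [sq_abs]
        linarith [sub_sq (G b x z) (G a x z), mul_nonneg hGb hGa]
    _ ≤ heatKernel b (x - z) ^ 2 + heatKernel a (x - z) ^ 2 := by
        gcongr <;> exact G_le_heatKernel _ x z

lemma abs_G_sub_G_le {a b x z : ℝ} (ha : 0 < a) (hab : a ≤ b) (hx : 0 ≤ x) (hz : 0 ≤ z) :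
    |G b x z - G a x z| ≤ 6 * ((b - a) / a) * √(b / a) * heatKernel (2 * b) (x - z) := by
  set K := 3 * ((b - a) / a) * √(b / a) with hK
  have hb : 0 < b := ha.trans_le hab
  have hK_nonneg : 0 ≤ K :=
    mul_nonneg (mul_nonneg (by norm_num) (div_nonneg (sub_nonneg.2 hab) ha.le)) (sqrt_nonneg _)
  have hdirect : |heatKernel b (x - z) - heatKernel a (x - z)| ≤ K * heatKernel (2 * b) (x - z) :=
    abs_heatKernel_sub_heatKernel_le ha hab (x - z)
  have hreflected :
      |heatKernel b (x + z) - heatKernel a (x + z)| ≤ K * heatKernel (2 * b) (x - z) :=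
    (abs_heatKernel_sub_heatKernel_le ha hab (x + z)).trans <|
      mul_le_mul_of_nonneg_left (heatKernel_add_le_heatKernel_sub (by positivity) hx hz) hK_nonneg
  calc |G b x z - G a x z|
      = |(heatKernel b (x - z) - heatKernel a (x - z))
          - (heatKernel b (x + z) - heatKernel a (x + z))| := by
        rw [G_eq_heatKernel_sub_heatKernel, G_eq_heatKernel_sub_heatKernel, sub_sub_sub_comm]
    _ ≤ K * heatKernel (2 * b) (x - z) + K * heatKernel (2 * b) (x - z) :=
        (abs_sub _ _).trans (add_le_add hdirect hreflected)
    _ = 6 * ((b - a) / a) * √(b / a) * heatKernel (2 * b) (x - z) := by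
        rw [hK]
        ring

lemma setIntegral_le_setIntegral_of_subset {α : Type*} [MeasurableSpace α] {μ : Measure α}
    {f g : α → ℝ} {s t : Set α} (hs : MeasurableSet s) (ht : MeasurableSet t) (hst : s ⊆ t)
    (hf : ∀ y ∈ s, 0 ≤ f y) (hfg : ∀ y ∈ s, f y ≤ g y) (hg : ∀ y ∈ t, 0 ≤ g y)
    (hg_int : IntegrableOn g t μ) :
    ∫ y in s, f y ∂μ ≤ ∫ y in t, g y ∂μ :=
  calc ∫ y in s, f y ∂μ
      ≤ ∫ y in s, g y ∂μ :=
        integral_mono_of_nonneg (ae_restrict_of_forall_mem hs hf) (hg_int.mono_set hst)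
          (ae_restrict_of_forall_mem hs hfg)
    _ ≤ ∫ y in t, g y ∂μ :=
        setIntegral_mono_set hg_int (ae_restrict_of_forall_mem ht hg) hst.eventuallyLE

lemma setIntegral_le_integral_of_le_comp_sub_left {f g : ℝ → ℝ} {s : Set ℝ}
    (hs : MeasurableSet s) (x : ℝ) (hf : ∀ z ∈ s, 0 ≤ f z) (hfg : ∀ z ∈ s, f z ≤ g (x - z))
    (hg : ∀ w, 0 ≤ g w) (hg_int : Integrable g) :
    ∫ z in s, f z ≤ ∫ w, g w := by
  rw [← integral_sub_left_eq_self g volume x, ← setIntegral_univ (f := fun z => g (x - z))]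
  exact setIntegral_le_setIntegral_of_subset hs .univ (subset_univ s) hf hfg
    (fun z _ => hg (x - z)) (hg_int.comp_sub_left x).integrableOn

/-- The squared `L²(0,∞)` norm of the increment `z ↦ Gr r b x z - Gr r a x z` of the weighted kernel
between the times `a` and `b`. -/
noncomputable def sqIncrement (r x a b : ℝ) : ℝ :=
  ∫ z in Ioi (0 : ℝ), |Gr r b x z - Gr r a x z| ^ 2

lemma sqIncrement_nonneg (r x a b : ℝ) : 0 ≤ sqIncrement r x a b :=
  integral_nonneg fun _ => by positivity

lemma sqIncrement_self (r x a : ℝ) : sqIncrement r x a a = 0 := by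
  simp [sqIncrement]

lemma abs_Gr_sub_Gr_sq (r a b x z : ℝ) :
    |Gr r b x z - Gr r a x z| ^ 2 = (exp (-r * (x - z)) * |G b x z - G a x z|) ^ 2 := by
  rw [Gr, Gr, ← mul_sub, abs_mul, abs_exp]

lemma inv_sqrt_mul_le_inv_sqrt {a b c : ℝ} (ha : 0 < a) (hc : 1 ≤ c) (hab : a ≤ b) :
    (√(c * b))⁻¹ ≤ (√a)⁻¹ := by
  gcongr
  nlinarith

lemma sqIncrement_le_inv_sqrt (r : ℝ) {x a b : ℝ} (hx : 0 ≤ x) (ha : 0 < a) (hab : a ≤ b) :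
    sqIncrement r x a b ≤ 2 * exp (4 * r ^ 2 * b) * (√a)⁻¹ := by
  have hb : 0 < b := ha.trans_le hab
  have hpointwise : ∀ z ∈ Ioi (0 : ℝ), |Gr r b x z - Gr r a x z| ^ 2
      ≤ (exp (-r * (x - z)) * heatKernel b (x - z)) ^ 2
        + (exp (-r * (x - z)) * heatKernel a (x - z)) ^ 2 := by
    intro z hz
    rw [abs_Gr_sub_Gr_sq, mul_pow, mul_pow, mul_pow, ← mul_add]
    gcongr
    exact abs_G_sub_G_sq_le ha.le hb.le hx (le_of_lt hz)
  have hintegral_le : ∀ t, 0 < t → a ≤ t → t ≤ b →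
      ∫ w, (exp (-r * w) * heatKernel t w) ^ 2 ≤ (√a)⁻¹ * exp (4 * r ^ 2 * b) := by
    intro t ht hat htb
    rw [integral_exp_mul_heatKernel_sq ht, neg_sq]
    gcongr ?_ * exp ?_
    · exact inv_sqrt_mul_le_inv_sqrt ha (by linarith [pi_gt_three]) hat
    · nlinarith [sq_nonneg r]
  calc sqIncrement r x a b
      ≤ ∫ w, ((exp (-r * w) * heatKernel b w) ^ 2 + (exp (-r * w) * heatKernel a w) ^ 2) :=
        setIntegral_le_integral_of_le_comp_sub_left measurableSet_Ioi x
          (fun z _ => by positivity) hpointwise (fun w => by positivity)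
          ((integrable_exp_mul_heatKernel_sq hb _).add (integrable_exp_mul_heatKernel_sq ha _))
    _ = (∫ w, (exp (-r * w) * heatKernel b w) ^ 2) + ∫ w, (exp (-r * w) * heatKernel a w) ^ 2 :=
        integral_add (integrable_exp_mul_heatKernel_sq hb _) (integrable_exp_mul_heatKernel_sq ha _)
    _ ≤ (√a)⁻¹ * exp (4 * r ^ 2 * b) + (√a)⁻¹ * exp (4 * r ^ 2 * b) :=
        add_le_add (hintegral_le b hb hab le_rfl) (hintegral_le a ha le_rfl hab)
    _ = 2 * exp (4 * r ^ 2 * b) * (√a)⁻¹ := by ring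

lemma sqIncrement_le_inv_sqrt_mul_div_sq (r : ℝ) {x a b : ℝ} (hx : 0 ≤ x) (ha : 0 < a)
    (hab : a ≤ b) :
    sqIncrement r x a b
      ≤ 36 * exp (4 * r ^ 2 * b) * (√a)⁻¹ * (b / a) * ((b - a) / a) ^ 2 := by
  have hb : 0 < b := ha.trans_le hab
  set K := 6 * ((b - a) / a) * √(b / a) with hK
  have hpointwise : ∀ z ∈ Ioi (0 : ℝ), |Gr r b x z - Gr r a x z| ^ 2
      ≤ K ^ 2 * (exp (-r * (x - z)) * heatKernel (2 * b) (x - z)) ^ 2 := by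
    intro z hz
    rw [abs_Gr_sub_Gr_sq, ← mul_pow, mul_left_comm]
    gcongr
    exact abs_G_sub_G_le ha hab hx (le_of_lt hz)
  calc sqIncrement r x a b
      ≤ ∫ w, K ^ 2 * (exp (-r * w) * heatKernel (2 * b) w) ^ 2 :=
        setIntegral_le_integral_of_le_comp_sub_left measurableSet_Ioi x
          (fun z _ => by positivity) hpointwise (fun w => by positivity)
          ((integrable_exp_mul_heatKernel_sq (by positivity) _).const_mul _)
    _ = K ^ 2 * ((√(8 * π * (2 * b)))⁻¹ * exp (4 * r ^ 2 * b)) := by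
        rw [integral_const_mul, integral_exp_mul_heatKernel_sq (by positivity), neg_sq]
        ring_nf
    _ ≤ K ^ 2 * ((√a)⁻¹ * exp (4 * r ^ 2 * b)) := by
        gcongr _ * (?_ * _)
        exact inv_sqrt_mul_le_inv_sqrt ha (by linarith [pi_gt_three]) (by linarith)
    _ = 36 * exp (4 * r ^ 2 * b) * (√a)⁻¹ * (b / a) * ((b - a) / a) ^ 2 := by
        rw [hK, mul_pow _ (√(b / a)), sq_sqrt (by positivity)]
        ring

lemma sqIncrement_le (r : ℝ) {x a b : ℝ} (hx : 0 ≤ x) (ha : 0 < a) (hab : a ≤ b) :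
    sqIncrement r x a b
      ≤ 72 * exp (4 * r ^ 2 * b) * ((√a)⁻¹ * min 1 ((b - a) / a) ^ 2) := by
  rcases le_total (b - a) a with hclose | hfar
  · have hratio : b / a ≤ 2 := (div_le_iff₀ ha).2 (by linarith)
    calc sqIncrement r x a b
        ≤ 36 * exp (4 * r ^ 2 * b) * (√a)⁻¹ * (b / a) * ((b - a) / a) ^ 2 :=
          sqIncrement_le_inv_sqrt_mul_div_sq r hx ha hab
      _ ≤ 36 * exp (4 * r ^ 2 * b) * (√a)⁻¹ * 2 * ((b - a) / a) ^ 2 := by gcongr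
      _ = 72 * exp (4 * r ^ 2 * b) * ((√a)⁻¹ * min 1 ((b - a) / a) ^ 2) := by
          rw [min_eq_right ((div_le_one ha).2 hclose)]
          ring
  · calc sqIncrement r x a b
        ≤ 2 * exp (4 * r ^ 2 * b) * (√a)⁻¹ := sqIncrement_le_inv_sqrt r hx ha hab
      _ ≤ 72 * exp (4 * r ^ 2 * b) * (√a)⁻¹ := by gcongr; norm_num
      _ = 72 * exp (4 * r ^ 2 * b) * ((√a)⁻¹ * min 1 ((b - a) / a) ^ 2) := by
          rw [min_eq_left ((one_le_div ha).2 hfar)]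
          ring

section RpowMulMin

variable {α β δ : ℝ}

lemma eqOn_Ioc_rpow_mul_min_one_div_rpow :
    EqOn (fun τ => τ ^ α * min 1 (δ / τ) ^ β) (fun τ => τ ^ α) (Ioc 0 δ) := by
  intro τ hτ
  simp only [min_eq_left ((one_le_div hτ.1).2 hτ.2), one_rpow, mul_one]

lemma eqOn_Ioi_rpow_mul_min_one_div_rpow (hδ : 0 < δ) :
    EqOn (fun τ => τ ^ α * min 1 (δ / τ) ^ β) (fun τ => δ ^ β * τ ^ (α - β)) (Ioi δ) := by
  intro τ hτ
  have hτ_pos : 0 < τ := hδ.trans hτ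
  simp only [min_eq_right ((div_le_one hτ_pos).2 (le_of_lt hτ)), div_rpow hδ.le hτ_pos.le,
    rpow_sub hτ_pos]
  ring

lemma integrableOn_Ioc_rpow_mul_min_one_div_rpow (hα : -1 < α) (hδ : 0 ≤ δ) :
    IntegrableOn (fun τ => τ ^ α * min 1 (δ / τ) ^ β) (Ioc 0 δ) :=
  ((intervalIntegrable_iff_integrableOn_Ioc_of_le hδ).1
    (intervalIntegral.intervalIntegrable_rpow' hα)).congr_fun
      eqOn_Ioc_rpow_mul_min_one_div_rpow.symm measurableSet_Ioc

lemma integrableOn_Ioi_rpow_mul_min_one_div_rpow (hαβ : α + 1 < β) (hδ : 0 < δ) :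
    IntegrableOn (fun τ => τ ^ α * min 1 (δ / τ) ^ β) (Ioi δ) :=
  IntegrableOn.congr_fun ((integrableOn_Ioi_rpow_of_lt (by linarith) hδ).const_mul _)
    (eqOn_Ioi_rpow_mul_min_one_div_rpow hδ).symm measurableSet_Ioi

lemma integrableOn_Ioi_zero_rpow_mul_min_one_div_rpow (hα : -1 < α) (hαβ : α + 1 < β)
    (hδ : 0 < δ) :
    IntegrableOn (fun τ => τ ^ α * min 1 (δ / τ) ^ β) (Ioi 0) := by
  rw [← Ioc_union_Ioi_eq_Ioi hδ.le]
  exact (integrableOn_Ioc_rpow_mul_min_one_div_rpow hα hδ.le).union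
    (integrableOn_Ioi_rpow_mul_min_one_div_rpow hαβ hδ)

lemma integral_Ioi_zero_rpow_mul_min_one_div_rpow (hα : -1 < α) (hαβ : α + 1 < β) (hδ : 0 < δ) :
    ∫ τ in Ioi 0, τ ^ α * min 1 (δ / τ) ^ β
      = ((α + 1)⁻¹ + (β - α - 1)⁻¹) * δ ^ (α + 1) := by
  have hnear : ∫ τ in Ioc 0 δ, τ ^ α * min 1 (δ / τ) ^ β = (α + 1)⁻¹ * δ ^ (α + 1) := by
    rw [setIntegral_congr_fun measurableSet_Ioc eqOn_Ioc_rpow_mul_min_one_div_rpow,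
      ← intervalIntegral.integral_of_le hδ.le, integral_rpow (Or.inl hα),
      zero_rpow (by linarith), sub_zero, div_eq_inv_mul]
  have hfar : ∫ τ in Ioi δ, τ ^ α * min 1 (δ / τ) ^ β = (β - α - 1)⁻¹ * δ ^ (α + 1) := by
    rw [setIntegral_congr_fun measurableSet_Ioi (eqOn_Ioi_rpow_mul_min_one_div_rpow hδ),
      integral_const_mul, integral_Ioi_rpow_of_lt (by linarith) hδ, ← neg_div_neg_eq, neg_neg,
      ← mul_div_assoc, ← rpow_add hδ, div_eq_inv_mul]
    ring_nf
  rw [← Ioc_union_Ioi_eq_Ioi hδ.le,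
    setIntegral_union (Ioc_disjoint_Ioi le_rfl) measurableSet_Ioi
      (integrableOn_Ioc_rpow_mul_min_one_div_rpow hα hδ.le)
      (integrableOn_Ioi_rpow_mul_min_one_div_rpow hαβ hδ),
    hnear, hfar, add_mul]

end RpowMulMin

lemma sqIncrement_rpow_le (r : ℝ) {x a b q : ℝ} (hx : 0 ≤ x) (ha : 0 < a) (hab : a ≤ b)
    (hq : 0 ≤ q) :
    sqIncrement r x a b ^ q
      ≤ (72 * exp (4 * r ^ 2 * b)) ^ q * (a ^ (-(q / 2)) * min 1 ((b - a) / a) ^ (2 * q)) := by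
  have hmin : 0 ≤ min 1 ((b - a) / a) :=
    le_min zero_le_one (div_nonneg (sub_nonneg.2 hab) ha.le)
  have hsqrt : (√a)⁻¹ ^ q = a ^ (-(q / 2)) := by
    rw [sqrt_eq_rpow, ← rpow_neg ha.le, ← rpow_mul ha.le]
    ring_nf
  calc sqIncrement r x a b ^ q
      ≤ (72 * exp (4 * r ^ 2 * b) * ((√a)⁻¹ * min 1 ((b - a) / a) ^ 2)) ^ q :=
        rpow_le_rpow (sqIncrement_nonneg r x a b) (sqIncrement_le r hx ha hab) hq
    _ = (72 * exp (4 * r ^ 2 * b)) ^ q * (a ^ (-(q / 2)) * min 1 ((b - a) / a) ^ (2 * q)) := by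
        rw [mul_rpow (y := (√a)⁻¹ * _) (by positivity) (by positivity),
          mul_rpow (x := (√a)⁻¹) (by positivity) (by positivity), hsqrt, rpow_mul hmin, rpow_two]

-- The majorant is integrable at infinity for `2 / 5 < q` and at zero for `q < 2`.
lemma setIntegral_sqIncrement_rpow_le (r : ℝ) {x s δ q : ℝ} (hx : 0 ≤ x) (hδ : 0 ≤ δ)
    (hq : 2 / 5 < q) (hq2 : q < 2) :
    ∫ τ in Ioc 0 s, sqIncrement r x τ (τ + δ) ^ q
      ≤ (72 * exp (4 * r ^ 2 * (s + δ))) ^ q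
        * (((1 - q / 2)⁻¹ + (5 * q / 2 - 1)⁻¹) * δ ^ (1 - q / 2)) := by
  rcases hδ.eq_or_lt with rfl | hδ
  · have hq_ne : q ≠ 0 := by linarith
    have hexponent_ne : 1 - q / 2 ≠ 0 := by linarith
    simp [sqIncrement_self, zero_rpow hq_ne, zero_rpow hexponent_ne]
  have hpointwise : ∀ τ ∈ Ioc 0 s, sqIncrement r x τ (τ + δ) ^ q
      ≤ (72 * exp (4 * r ^ 2 * (s + δ))) ^ q * (τ ^ (-(q / 2)) * min 1 (δ / τ) ^ (2 * q)) := by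
    rintro τ ⟨hτ, hτs⟩
    calc sqIncrement r x τ (τ + δ) ^ q
        ≤ (72 * exp (4 * r ^ 2 * (τ + δ))) ^ q * (τ ^ (-(q / 2)) * min 1 (δ / τ) ^ (2 * q)) := by
          simpa only [add_sub_cancel_left] using
            sqIncrement_rpow_le r hx hτ (by linarith : τ ≤ τ + δ) (by linarith : 0 ≤ q)
      _ ≤ (72 * exp (4 * r ^ 2 * (s + δ))) ^ q
          * (τ ^ (-(q / 2)) * min 1 (δ / τ) ^ (2 * q)) := by gcongr
  calc ∫ τ in Ioc 0 s, sqIncrement r x τ (τ + δ) ^ q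
      ≤ ∫ τ in Ioi 0,
          (72 * exp (4 * r ^ 2 * (s + δ))) ^ q * (τ ^ (-(q / 2)) * min 1 (δ / τ) ^ (2 * q)) :=
        setIntegral_le_setIntegral_of_subset measurableSet_Ioc measurableSet_Ioi Ioc_subset_Ioi_self
          (fun τ _ => rpow_nonneg (sqIncrement_nonneg r x τ (τ + δ)) q) hpointwise
          (fun τ hτ => by
            have : 0 < τ := hτ
            positivity)
          ((integrableOn_Ioi_zero_rpow_mul_min_one_div_rpow (by linarith) (by linarith)
            hδ).const_mul _)
    _ = (72 * exp (4 * r ^ 2 * (s + δ))) ^ q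
        * (((1 - q / 2)⁻¹ + (5 * q / 2 - 1)⁻¹) * δ ^ (1 - q / 2)) := by
        rw [integral_const_mul,
          integral_Ioi_zero_rpow_mul_min_one_div_rpow (by linarith) (by linarith) hδ]
        ring_nf

lemma setIntegral_Ioc_comp_sub_left (f : ℝ → ℝ) {s : ℝ} (hs : 0 ≤ s) :
    ∫ u in Ioc 0 s, f (s - u) = ∫ u in Ioc 0 s, f u := by
  rw [← intervalIntegral.integral_of_le hs, ← intervalIntegral.integral_of_le hs,
    intervalIntegral.integral_comp_sub_left, sub_self, sub_zero]

lemma setIntegral_sqIncrement_sub_rpow_le (r : ℝ) {x s t q : ℝ} (hx : 0 ≤ x) (hs : 0 ≤ s)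
    (hst : s ≤ t) (hq : 2 / 5 < q) (hq2 : q < 2) :
    ∫ u in Ioc 0 s, sqIncrement r x (s - u) (t - u) ^ q
      ≤ (72 * exp (4 * r ^ 2 * t)) ^ q
        * (((1 - q / 2)⁻¹ + (5 * q / 2 - 1)⁻¹) * (t - s) ^ (1 - q / 2)) :=
  calc ∫ u in Ioc 0 s, sqIncrement r x (s - u) (t - u) ^ q
      = ∫ u in Ioc 0 s, sqIncrement r x (s - u) (s - u + (t - s)) ^ q := by
        simp only [sub_add_sub_cancel']
    _ = ∫ τ in Ioc 0 s, sqIncrement r x τ (τ + (t - s)) ^ q :=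
        setIntegral_Ioc_comp_sub_left (fun τ => sqIncrement r x τ (τ + (t - s)) ^ q) hs
    _ ≤ (72 * exp (4 * r ^ 2 * (s + (t - s)))) ^ q
        * (((1 - q / 2)⁻¹ + (5 * q / 2 - 1)⁻¹) * (t - s) ^ (1 - q / 2)) :=
        setIntegral_sqIncrement_rpow_le r hx (sub_nonneg.2 hst) hq hq2
    _ = (72 * exp (4 * r ^ 2 * t)) ^ q
        * (((1 - q / 2)⁻¹ + (5 * q / 2 - 1)⁻¹) * (t - s) ^ (1 - q / 2)) := by
        rw [add_sub_cancel]

/-- Lemma A.1 (ii) of Hambly–Kalsi: time-increment bound for `G_r`. -/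
theorem stmt_1 (r T p : ℝ) (hT : 0 < T) (hp : 4 < p) :
    ∃ C > (0:ℝ), ∀ s t : ℝ, 0 ≤ s → s ≤ t → t ≤ T → ∀ x ≥ (0:ℝ),
      (∫ u in Ioc (0:ℝ) s,
          (∫ z in Ioi (0:ℝ), |Gr r (t - u) x z - Gr r (s - u) x z| ^ 2) ^ (p / (p - 2)))
          ^ ((p - 2) / 2)
        ≤ C * |t - s| ^ ((p - 4) / 4) := by
  have hp2 : 0 < p - 2 := by linarith
  set q := p / (p - 2) with hq
  have hq1 : 1 < q := (one_lt_div hp2).2 (by linarith)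
  have hq2 : q < 2 := (div_lt_iff₀ hp2).2 (by linarith)
  set K := (72 * exp (4 * r ^ 2 * T)) ^ q * ((1 - q / 2)⁻¹ + (5 * q / 2 - 1)⁻¹) with hK
  have hcoeff : 0 < (1 - q / 2)⁻¹ + (5 * q / 2 - 1)⁻¹ :=
    add_pos (inv_pos.2 (by linarith)) (inv_pos.2 (by linarith))
  refine ⟨K ^ ((p - 2) / 2), by positivity, fun s t hs hst htT x hx => ?_⟩
  have hδ : 0 ≤ t - s := sub_nonneg.2 hst
  calc (∫ u in Ioc 0 s, sqIncrement r x (s - u) (t - u) ^ q) ^ ((p - 2) / 2)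
      ≤ (K * (t - s) ^ (1 - q / 2)) ^ ((p - 2) / 2) := by
        gcongr
        · exact integral_nonneg fun u => rpow_nonneg (sqIncrement_nonneg r x (s - u) (t - u)) q
        · rw [hK, mul_assoc]
          refine (setIntegral_sqIncrement_sub_rpow_le r hx hs hst (by linarith) hq2).trans ?_
          gcongr
    _ = K ^ ((p - 2) / 2) * |t - s| ^ ((p - 4) / 4) := by
        rw [mul_rpow (by positivity) (by positivity), ← rpow_mul hδ, abs_of_nonneg hδ]
        congr 2
        rw [hq]
        field_simp
        ring
end

section
/- Let r ∈ ℝ, T > 0, p > 4, R > 0, and let σ : [0,∞)×ℝ → ℝ be measurable with |σ(x,u)| ≤ R(e^{rx}+|u|) for all x ≥ 0, u ∈ ℝ. Then there exists a constant C = C(r,p,R,T) > 0 such that for every continuous u : [0,T]×[0,∞) → ℝ with ‖u‖_{C_r^T} < ∞, and for all t ∈ [0,T] and x ≥ 0, ∫_0^t ∫_0^∞ G(t−s,x,y)² |σ(y,u(s,y))|² dy ds ≤ C e^{2rx} ( 1 + ‖u‖_{C_r^T}² ) < ∞. -/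
/-!
On the quarter plane `0 ≤ G(τ,x,y)`, and `G(τ,x,·)` lies below the density of `N(x, 2τ)`. The square
of that density is `(8πτ)^{-1/2}` times the density of `N(x, τ)`, so integrating `G²` against the
weight `e^{2ry}` is bounded by a Gaussian moment generating function:
`∫_0^∞ G(τ,x,y)² e^{2ry} dy ≤ (8πτ)^{-1/2} e^{2rx + 2r²τ}`.
The singularity at `τ = 0` is integrable. The growth condition supplies
`|σ(y,u(s,y))|² ≤ 2R²(1 + ‖u‖²) e^{2ry}`.

The estimates are carried out for `ℝ≥0∞`-valued integrals, where a bound also asserts finiteness;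
the real integrals can only be smaller.
-/

open MeasureTheory Real Set Filter

lemma ofReal_integral_le_lintegral_ofReal {α : Type*} [MeasurableSpace α] {μ : Measure α}
    (f : α → ℝ) : ENNReal.ofReal (∫ a, f a ∂μ) ≤ ∫⁻ a, ENNReal.ofReal (f a) ∂μ := by
  by_cases hf : Integrable f μ
  · rw [integral_eq_lintegral_pos_part_sub_lintegral_neg_part hf]
    exact (ENNReal.ofReal_le_ofReal (sub_le_self _ ENNReal.toReal_nonneg)).trans
      ENNReal.ofReal_toReal_le
  · simp [integral_undef hf]

lemma integral_integral_le_of_lintegral_lintegral_le {α β : Type*} [MeasurableSpace α]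
    [MeasurableSpace β] {μ : Measure α} {ν : Measure β} {f : α → β → ℝ} {B : ℝ} (hB : 0 ≤ B)
    (h : ∫⁻ a, ∫⁻ b, ENNReal.ofReal (f a b) ∂ν ∂μ ≤ ENNReal.ofReal B) :
    ∫ a, ∫ b, f a b ∂ν ∂μ ≤ B :=
  (ENNReal.ofReal_le_ofReal_iff hB).1 <| (ofReal_integral_le_lintegral_ofReal _).trans <|
    (lintegral_mono fun a => ofReal_integral_le_lintegral_ofReal (f a)).trans h

lemma lintegral_inv_sqrt_mul_sub {c : ℝ} (hc : 0 < c) {t : ℝ} (ht : 0 ≤ t) :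
    ∫⁻ s in Ioo 0 t, ENNReal.ofReal (√(c * (t - s)))⁻¹ = ENNReal.ofReal (2 * √(t / c)) := by
  have hcont : ContinuousOn (fun s => -(2 * √((t - s) / c))) (Icc 0 t) := by fun_prop
  have hderiv : ∀ s ∈ Ioo 0 t,
      HasDerivAt (fun s => -(2 * √((t - s) / c))) (√(c * (t - s)))⁻¹ s := fun s hs => by
    have hpos : 0 < (t - s) / c := div_pos (sub_pos.2 hs.2) hc
    have hrescale : √(c * (t - s)) = c * √((t - s) / c) := by
      rw [show c * (t - s) = c ^ 2 * ((t - s) / c) by field_simp,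
        Real.sqrt_mul (by positivity), Real.sqrt_sq hc.le]
    refine (((((hasDerivAt_id' s).const_sub t).div_const c).sqrt
      hpos.ne').const_mul 2).fun_neg.congr_deriv ?_
    rw [hrescale]
    field_simp
  have hint := intervalIntegral.integrableOn_deriv_of_nonneg hcont hderiv fun _ _ => by positivity
  have hFTC : ∫ s in Ioo 0 t, (√(c * (t - s)))⁻¹ = 2 * √(t / c) := by
    rw [← integral_Ioc_eq_integral_Ioo, ← intervalIntegral.integral_of_le ht,
      intervalIntegral.integral_eq_sub_of_hasDerivAt_of_le ht hcont hderiv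
        ((intervalIntegrable_iff_integrableOn_Ioc_of_le ht).2 hint)]
    simp
  rw [← hFTC, ofReal_integral_eq_lintegral_ofReal (hint.mono_set Ioo_subset_Ioc_self)
    (ae_of_all _ fun _ => by positivity)]

section HeatKernel

open ProbabilityTheory
open scoped NNReal

lemma gaussianPDFReal_two_mul_sq (μ : ℝ) (v : ℝ≥0) (x : ℝ) :
    gaussianPDFReal μ (2 * v) x ^ 2 = (√(8 * π * v))⁻¹ * gaussianPDFReal μ v x := by
  have hprefactor : ((√(2 * π * (2 * v)))⁻¹) ^ 2 = (√(8 * π * v))⁻¹ * (√(2 * π * v))⁻¹ := by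
    rw [inv_pow, Real.sq_sqrt (by positivity), ← mul_inv, ← Real.sqrt_mul (by positivity),
      show 8 * π * v * (2 * π * v) = (2 * π * (2 * v)) ^ 2 by ring, Real.sqrt_sq (by positivity)]
  have hexponent : 2 * (-(x - μ) ^ 2 / (2 * (2 * v : ℝ))) = -(x - μ) ^ 2 / (2 * v) := by
    ring
  simp only [gaussianPDFReal, NNReal.coe_mul, NNReal.coe_ofNat]
  rw [mul_pow, hprefactor, ← Real.exp_nat_mul, Nat.cast_ofNat, hexponent, mul_assoc]

lemma lintegral_gaussianPDFReal_mul_exp (μ : ℝ) {v : ℝ≥0} (hv : v ≠ 0) (c : ℝ) :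
    ∫⁻ y, ENNReal.ofReal (gaussianPDFReal μ v y * Real.exp (c * y)) =
      ENNReal.ofReal (Real.exp (μ * c + v * c ^ 2 / 2)) := by
  calc ∫⁻ y, ENNReal.ofReal (gaussianPDFReal μ v y * Real.exp (c * y))
      = ∫⁻ y, gaussianPDF μ v y * ENNReal.ofReal (Real.exp (c * y)) := by
        simp only [gaussianPDF, ENNReal.ofReal_mul (gaussianPDFReal_nonneg μ v _)]
    _ = ∫⁻ y, ENNReal.ofReal (Real.exp (c * y)) ∂gaussianReal μ v := by
        rw [gaussianReal_of_var_ne_zero μ hv]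
        exact (lintegral_withDensity_eq_lintegral_mul _ (measurable_gaussianPDF μ v)
          (by fun_prop)).symm
    _ = ENNReal.ofReal (mgf id (gaussianReal μ v) c) :=
        (ofReal_integral_eq_lintegral_ofReal (integrable_exp_mul_gaussianReal c)
          (ae_of_all _ fun _ => (Real.exp_pos _).le)).symm
    _ = ENNReal.ofReal (Real.exp (μ * c + v * c ^ 2 / 2)) := by rw [mgf_id_gaussianReal]

lemma G_nonneg_s12 (τ : ℝ≥0) {x y : ℝ} (hxy : 0 ≤ x * y) : 0 ≤ G τ x y := by
  refine mul_nonneg (by positivity) (sub_nonneg.2 (Real.exp_le_exp.2 ?_))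
  gcongr ?_ / _
  linarith [add_sq x y, sub_sq x y]

lemma G_le_gaussianPDFReal (τ : ℝ≥0) (x y : ℝ) : G τ x y ≤ gaussianPDFReal x (2 * τ) y := by
  calc G τ x y ≤ (√(4 * π * τ))⁻¹ * Real.exp (-(x - y) ^ 2 / (4 * τ)) :=
        mul_le_mul_of_nonneg_left (sub_le_self _ (Real.exp_pos _).le) (by positivity)
    _ = gaussianPDFReal x (2 * τ) y := by
        simp only [gaussianPDFReal, NNReal.coe_mul, NNReal.coe_ofNat]
        ring_nf

lemma G_sq_le_gaussianPDFReal (τ : ℝ≥0) {x y : ℝ} (hxy : 0 ≤ x * y) :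
    G τ x y ^ 2 ≤ (√(8 * π * τ))⁻¹ * gaussianPDFReal x τ y := by
  rw [← gaussianPDFReal_two_mul_sq]
  exact pow_le_pow_left₀ (G_nonneg_s12 τ hxy) (G_le_gaussianPDFReal τ x y) 2

lemma lintegral_G_sq_mul_exp_le (r : ℝ) {τ : ℝ≥0} (hτ : τ ≠ 0) {x : ℝ} (hx : 0 ≤ x) :
    ∫⁻ y in Ioi 0, ENNReal.ofReal (G τ x y ^ 2 * Real.exp (2 * r * y)) ≤
      ENNReal.ofReal ((√(8 * π * τ))⁻¹ * Real.exp (2 * r * x + 2 * r ^ 2 * τ)) := by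
  have hsqrt : 0 ≤ (√(8 * π * τ))⁻¹ := by positivity
  calc ∫⁻ y in Ioi 0, ENNReal.ofReal (G τ x y ^ 2 * Real.exp (2 * r * y))
      ≤ ∫⁻ y in Ioi 0, ENNReal.ofReal (√(8 * π * τ))⁻¹ *
          ENNReal.ofReal (gaussianPDFReal x τ y * Real.exp (2 * r * y)) := by
        refine setLIntegral_mono' measurableSet_Ioi fun y (hy : 0 < y) => ?_
        rw [← ENNReal.ofReal_mul hsqrt, ← mul_assoc]
        gcongr
        exact G_sq_le_gaussianPDFReal τ (mul_nonneg hx hy.le)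
    _ ≤ ∫⁻ y, ENNReal.ofReal (√(8 * π * τ))⁻¹ *
          ENNReal.ofReal (gaussianPDFReal x τ y * Real.exp (2 * r * y)) :=
        setLIntegral_le_lintegral _ _
    _ = ENNReal.ofReal ((√(8 * π * τ))⁻¹ * Real.exp (2 * r * x + 2 * r ^ 2 * τ)) := by
        rw [lintegral_const_mul' _ _ ENNReal.ofReal_ne_top,
          lintegral_gaussianPDFReal_mul_exp x hτ, ← ENNReal.ofReal_mul hsqrt]
        ring_nf

lemma lintegral_lintegral_G_sq_mul_exp_le (r : ℝ) {t x : ℝ} (ht : 0 ≤ t) (hx : 0 ≤ x) :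
    ∫⁻ s in Ioc 0 t, ∫⁻ y in Ioi 0, ENNReal.ofReal (G (t - s) x y ^ 2 * Real.exp (2 * r * y)) ≤
      ENNReal.ofReal (2 * √(t / (8 * π)) * Real.exp (2 * r * x + 2 * r ^ 2 * t)) := by
  calc ∫⁻ s in Ioc 0 t, ∫⁻ y in Ioi 0, ENNReal.ofReal (G (t - s) x y ^ 2 * Real.exp (2 * r * y))
      = ∫⁻ s in Ioo 0 t, ∫⁻ y in Ioi 0,
          ENNReal.ofReal (G (t - s) x y ^ 2 * Real.exp (2 * r * y)) :=
        setLIntegral_congr Ioo_ae_eq_Ioc.symm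
    _ ≤ ∫⁻ s in Ioo 0 t, ENNReal.ofReal (√(8 * π * (t - s)))⁻¹ *
          ENNReal.ofReal (Real.exp (2 * r * x + 2 * r ^ 2 * t)) := by
        refine setLIntegral_mono' measurableSet_Ioo fun s hs => ?_
        rw [← ENNReal.ofReal_mul (by positivity)]
        lift t - s to ℝ≥0 using sub_nonneg.2 hs.2.le with τ hτ
        have hτ0 : τ ≠ 0 := by
          rw [← NNReal.coe_ne_zero, hτ]
          exact (sub_pos.2 hs.2).ne'
        refine (lintegral_G_sq_mul_exp_le r hτ0 hx).trans ?_
        gcongr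
        linarith [hs.1]
    _ = ENNReal.ofReal (2 * √(t / (8 * π)) * Real.exp (2 * r * x + 2 * r ^ 2 * t)) := by
        rw [lintegral_mul_const' _ _ ENNReal.ofReal_ne_top,
          lintegral_inv_sqrt_mul_sub (by positivity) ht, ← ENNReal.ofReal_mul (by positivity)]

end HeatKernel

lemma abs_le_CrNorm_mul_exp {r T : ℝ} {u : ℝ → ℝ → ℝ} (hu : CrBdd r T u) {s y : ℝ}
    (hs : s ∈ Icc 0 T) (hy : 0 ≤ y) : |u s y| ≤ CrNorm r T u * Real.exp (r * y) := by
  have hweighted : Real.exp (-r * y) * |u s y| ≤ CrNorm r T u :=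
    le_csSup hu ⟨(s, y), ⟨hs, hy⟩, rfl⟩
  rwa [neg_mul, Real.exp_neg, inv_mul_le_iff₀' (Real.exp_pos _)] at hweighted

lemma sq_le_of_abs_le_mul_exp_add {r T R : ℝ} {u : ℝ → ℝ → ℝ} (hu : CrBdd r T u) {s y z : ℝ}
    (hs : s ∈ Icc 0 T) (hy : 0 ≤ y) (hz : |z| ≤ R * (Real.exp (r * y) + |u s y|)) :
    |z| ^ 2 ≤ 2 * R ^ 2 * (1 + CrNorm r T u ^ 2) * Real.exp (2 * r * y) := by
  calc |z| ^ 2 ≤ (R * (Real.exp (r * y) + |u s y|)) ^ 2 := by gcongr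
    _ = R ^ 2 * (Real.exp (r * y) + |u s y|) ^ 2 := mul_pow ..
    _ ≤ R ^ 2 * (2 * (Real.exp (r * y) ^ 2 + |u s y| ^ 2)) := by
        gcongr
        exact add_sq_le
    _ ≤ R ^ 2 * (2 * (Real.exp (r * y) ^ 2 + (CrNorm r T u * Real.exp (r * y)) ^ 2)) := by
        gcongr
        exact abs_le_CrNorm_mul_exp hu hs hy
    _ = 2 * R ^ 2 * (1 + CrNorm r T u ^ 2) * Real.exp (r * y) ^ 2 := by ring
    _ = 2 * R ^ 2 * (1 + CrNorm r T u ^ 2) * Real.exp (2 * r * y) := by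
        rw [← Real.exp_nat_mul, Nat.cast_ofNat, mul_assoc 2 r y]

theorem stmt_12_general {r T R : ℝ} {σ u : ℝ → ℝ → ℝ}
    (hσ : ∀ x ≥ (0 : ℝ), ∀ v : ℝ, |σ x v| ≤ R * (Real.exp (r * x) + |v|)) (hu : CrBdd r T u)
    {t x : ℝ} (ht : t ∈ Icc 0 T) (hx : 0 ≤ x) :
    ∫⁻ s in Ioc 0 t, ∫⁻ y in Ioi 0, ENNReal.ofReal (G (t - s) x y ^ 2 * |σ y (u s y)| ^ 2) ≤
      ENNReal.ofReal (4 * R ^ 2 * √(T / (8 * π)) * Real.exp (2 * r ^ 2 * T) *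
        Real.exp (2 * r * x) * (1 + CrNorm r T u ^ 2)) := by
  set M := 2 * R ^ 2 * (1 + CrNorm r T u ^ 2) with hM
  have hM_nonneg : 0 ≤ M := by positivity
  calc ∫⁻ s in Ioc 0 t, ∫⁻ y in Ioi 0, ENNReal.ofReal (G (t - s) x y ^ 2 * |σ y (u s y)| ^ 2)
      ≤ ∫⁻ s in Ioc 0 t, ∫⁻ y in Ioi 0,
          ENNReal.ofReal M * ENNReal.ofReal (G (t - s) x y ^ 2 * Real.exp (2 * r * y)) := by
        refine setLIntegral_mono' measurableSet_Ioc fun s hs =>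
          setLIntegral_mono' measurableSet_Ioi fun y (hy : 0 < y) => ?_
        rw [← ENNReal.ofReal_mul hM_nonneg, mul_left_comm]
        gcongr
        exact sq_le_of_abs_le_mul_exp_add hu ⟨hs.1.le, hs.2.trans ht.2⟩ hy.le (hσ y hy.le _)
    _ = ENNReal.ofReal M * ∫⁻ s in Ioc 0 t, ∫⁻ y in Ioi 0,
          ENNReal.ofReal (G (t - s) x y ^ 2 * Real.exp (2 * r * y)) := by
        simp only [lintegral_const_mul' _ _ ENNReal.ofReal_ne_top]
    _ ≤ ENNReal.ofReal (M * (2 * √(t / (8 * π)) * Real.exp (2 * r * x + 2 * r ^ 2 * t))) := by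
        rw [ENNReal.ofReal_mul hM_nonneg]
        gcongr
        exact lintegral_lintegral_G_sq_mul_exp_le r ht.1 hx
    _ ≤ ENNReal.ofReal (M * (2 * √(T / (8 * π)) * Real.exp (2 * r * x + 2 * r ^ 2 * T))) := by
        gcongr <;> exact ht.2
    _ = _ := by rw [hM, Real.exp_add]; ring_nf

/-- as in (4.7) of the paper: square-kernel bound for the diffusion term. -/
theorem stmt_12 (r T p R : ℝ) (hT : 0 < T) (hp : 4 < p) (hR : 0 < R) :
    ∃ C > (0:ℝ), ∀ σ : ℝ → ℝ → ℝ,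
      Measurable (Function.uncurry σ) →
      (∀ x ≥ (0:ℝ), ∀ u : ℝ, |σ x u| ≤ R * (Real.exp (r * x) + |u|)) →
      ∀ u : ℝ → ℝ → ℝ,
        ContinuousOn (Function.uncurry u) (Icc 0 T ×ˢ Ici 0) → CrBdd r T u →
        ∀ t ∈ Icc (0:ℝ) T, ∀ x ≥ (0:ℝ),
          (∫ s in Ioc (0:ℝ) t, ∫ y in Ioi (0:ℝ),
              (G (t - s) x y) ^ 2 * |σ y (u s y)| ^ 2)
            ≤ C * Real.exp (2 * r * x) * (1 + (CrNorm r T u) ^ 2) :=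
  ⟨4 * R ^ 2 * √(T / (8 * π)) * Real.exp (2 * r ^ 2 * T), by positivity,
    fun _ _ hσ _ _ hu _ ht _ hx => integral_integral_le_of_lintegral_lintegral_le (by positivity)
      (stmt_12_general hσ hu ht hx)⟩
end
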